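/- arXiv:2112.06659 — 4 statements merged into one kernel-verified Lean document; each statement's English description precedes it below -/
import Mathlib

section
/- Let F be a union-closed family on n elements with m sets, and let A ∈ F have level i ≥ 2. Then every element x ∈ A belongs to at least |T(A)| − 1 of the sets of the tent T(A). -/
open Finset

/-- The minimal members of a family of finite sets: those `A` such that no
member `B ≠ A` satisfies `B ⊆ A`. -/
def minimalSets (G : Finset (Finset ℕ)) : Finset (Finset ℕ) :=
  G.filter fun A => ∀ B ∈ G, B ≠ A → ¬ B ⊆ A

/-- The family remaining after removing the first `i` layers of the height
decomposition. -/
def rest (F : Finset (Finset ℕ)) : ℕ → Finset (Finset ℕ)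
  | 0 => F
  | i + 1 => rest F i \ minimalSets (rest F i)

/-- The `i`-th layer `π_i` of the height decomposition (meaningful for `i ≥ 1`):
`π_{i+1}` is the family of minimal members of `F \ (π₁ ∪ ⋯ ∪ π_i)`. -/
def layer (F : Finset (Finset ℕ)) : ℕ → Finset (Finset ℕ)
  | 0 => ∅
  | i + 1 => minimalSets (rest F i)

/-- The height number `H(F)`: the least `H` with `F = π₁ ∪ ⋯ ∪ π_H`,
equivalently the least `H` with `rest F H = ∅`. -/
noncomputable def height (F : Finset (Finset ℕ)) : ℕ :=
  sInf {H : ℕ | rest F H = ∅}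

/-- `F` is a union-closed family on `n` elements with `m` sets: a finite family
of `m` distinct nonempty finite sets whose union is `{1, …, n}`, closed under
unions. -/
def IsUC (F : Finset (Finset ℕ)) (n m : ℕ) : Prop :=
  F.Nonempty ∧ F.card = m ∧ (∀ A ∈ F, A.Nonempty) ∧
    F.sup id = Finset.Icc 1 n ∧ ∀ A ∈ F, ∀ B ∈ F, A ∪ B ∈ F

/-- The tent `T(A)` of a set `A` of level `i ≥ 2`: the family
`{A} ∪ {B ∈ π_{i−1} : B ⊆ A}`. -/
def tent (F : Finset (Finset ℕ)) (i : ℕ) (A : Finset ℕ) : Finset (Finset ℕ) :=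
  insert A ((layer F (i - 1)).filter fun B => B ⊆ A)

/-- `F` is separating: every pair of distinct elements of `{1, …, n}` is
separated by some member of `F`. -/
def Separating (F : Finset (Finset ℕ)) (n : ℕ) : Prop :=
  ∀ x ∈ Finset.Icc 1 n, ∀ y ∈ Finset.Icc 1 n, x ≠ y →
    ∃ A ∈ F, (x ∈ A ∧ y ∉ A) ∨ (y ∈ A ∧ x ∉ A)

theorem rest_mono_up (F : Finset (Finset ℕ)) (k : ℕ) :
    ∀ B ∈ rest F k, ∀ D ∈ F, B ⊆ D → D ∈ rest F k := by
  induction k with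
  | zero => intro B _ D hD _; exact hD
  | succ k ih =>
    intro B hB D hD hBD
    have hB' := hB
    simp only [rest, mem_sdiff] at hB ⊢
    refine ⟨ih B hB.1 D hD hBD, fun hm => ?_⟩
    by_cases h : B = D
    · subst h; exact hB.2 hm
    · exact (mem_filter.1 hm).2 B hB.1 h hBD

theorem rest_sub (F : Finset (Finset ℕ)) (k : ℕ) : rest F k ⊆ F := by
  induction k with
  | zero => exact Subset.refl _
  | succ k ih => exact sdiff_subset.trans ih

/-- For `A ∈ F` of level `i ≥ 2`, every element `x ∈ A` belongs to
at least `|T(A)| − 1` of the sets of the tent `T(A)`. -/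
theorem tent_frequencies (n m i : ℕ) (F : Finset (Finset ℕ)) (A : Finset ℕ)
    (hF : IsUC F n m) (hi : 2 ≤ i) (hA : A ∈ layer F i) :
    ∀ x ∈ A, (tent F i A).card - 1 ≤ ((tent F i A).filter fun S => x ∈ S).card := by
  intro x hx
  obtain ⟨k, rfl⟩ : ∃ k, i = k + 2 := ⟨i - 2, by omega⟩
  have hsplit := card_filter_add_card_filter_not (s := tent F (k + 2) A) (fun S => x ∈ S)
  have hone : ((tent F (k + 2) A).filter fun S => ¬ x ∈ S).card ≤ 1 := by
    rw [card_le_one]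
    have key : ∀ S ∈ (tent F (k + 2) A).filter (fun S => ¬ x ∈ S),
        S ∈ minimalSets (rest F k) ∧ S ⊆ A ∧ x ∉ S := by
      intro S hS
      obtain ⟨hS, hxS⟩ := mem_filter.1 hS
      rcases mem_insert.1 hS with rfl | hS
      · exact absurd hx hxS
      · exact ⟨(mem_filter.1 hS).1, (mem_filter.1 hS).2, hxS⟩
    intro B hB C hC
    obtain ⟨hB, hBA, hxB⟩ := key B hB
    obtain ⟨hC, hCA, hxC⟩ := key C hC
    by_contra hne
    have hBr := (mem_filter.1 hB).1
    have hCr := (mem_filter.1 hC).1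
    have hUF : B ∪ C ∈ F := hF.2.2.2.2 B (rest_sub F k hBr) C (rest_sub F k hCr)
    have hU : B ∪ C ∈ rest F k := rest_mono_up F k B hBr _ hUF subset_union_left
    have hBU : B ≠ B ∪ C := fun h =>
      (mem_filter.1 hB).2 C hCr (Ne.symm hne) (h ▸ subset_union_right)
    have hU' : B ∪ C ∈ rest F (k + 1) :=
      mem_sdiff.2 ⟨hU, fun hm => (mem_filter.1 hm).2 B hBr hBU subset_union_left⟩
    have hUA : B ∪ C ≠ A := by
      rintro rfl
      rcases mem_union.1 hx with h | h
      · exact hxB h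
      · exact hxC h
    exact (mem_filter.1 hA).2 _ hU' hUA (union_subset hBA hCA)
  omega
end

section
/- Let F be a union-closed family on n elements with m sets, and let A, B ∈ F be distinct sets both of level i ≥ 2. Then the tents T(A) and T(B) have at most one common member, i.e., |T(A) ∩ T(B)| ≤ 1. -/
open Finset

theorem mem_minimalSets_iff (G : Finset (Finset ℕ)) (X : Finset ℕ) :
    X ∈ minimalSets G ↔ X ∈ G ∧ ∀ B ∈ G, B ≠ X → ¬ B ⊆ X := by
  simp [minimalSets]

theorem rest_upward (F : Finset (Finset ℕ)) (X Y : Finset ℕ) (hY : Y ∈ F) (hXY : X ⊆ Y)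
    (j : ℕ) (hX : X ∈ rest F j) : Y ∈ rest F j := by
  induction j with
  | zero => exact hY
  | succ j ih =>
    rw [rest, mem_sdiff] at hX ⊢
    refine ⟨ih hX.1, fun h => ?_⟩
    by_cases hne : X = Y
    · exact hX.2 (hne ▸ h)
    · exact ((mem_minimalSets_iff _ _).1 h).2 X hX.1 hne hXY

theorem rest_subset_family (F : Finset (Finset ℕ)) (j : ℕ) : rest F j ⊆ F := by
  induction j with
  | zero => exact Finset.Subset.refl _
  | succ j ih => exact sdiff_subset.trans ih

/-- Two distinct sets `A, B ∈ F` of the same level `i ≥ 2` have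
tents with at most one common member. -/
theorem tent_inter_card_le_one (n m i : ℕ) (F : Finset (Finset ℕ))
    (A B : Finset ℕ) (hF : IsUC F n m) (hi : 2 ≤ i)
    (hA : A ∈ layer F i) (hB : B ∈ layer F i) (hAB : A ≠ B) :
    (tent F i A ∩ tent F i B).card ≤ 1 := by
  obtain ⟨j, rfl⟩ : ∃ j, i = j + 2 := ⟨i - 2, by omega⟩
  have hUC := hF.2.2.2.2
  have hlay : layer F (j + 2 - 1) = minimalSets (rest F j) := rfl
  replace hA := (mem_minimalSets_iff (rest F (j + 1)) A).1 hA
  replace hB := (mem_minimalSets_iff (rest F (j + 1)) B).1 hB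
  have hAn : A ∉ minimalSets (rest F j) := (mem_sdiff.1 hA.1).2
  have hBn : B ∉ minimalSets (rest F j) := (mem_sdiff.1 hB.1).2
  have key : ∀ C ∈ tent F (j + 2) A ∩ tent F (j + 2) B,
      C ∈ minimalSets (rest F j) ∧ C ⊆ A ∧ C ⊆ B := by
    intro C hC
    simp only [tent, hlay, mem_inter, mem_insert, mem_filter] at hC
    obtain ⟨h1 | h1, h2 | h2⟩ := hC
    · exact absurd (h1.symm.trans h2) hAB
    · exact absurd (h1 ▸ h2.1) hAn
    · exact absurd (h2 ▸ h1.1) hBn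
    · exact ⟨h1.1, h1.2, h2.2⟩
  rw [card_le_one]
  intro C hC D hD
  by_contra hne
  obtain ⟨hC, hCA, hCB⟩ := key C hC
  obtain ⟨hD, hDA, hDB⟩ := key D hD
  have hC' := (mem_minimalSets_iff _ _).1 hC
  have hD' := (mem_minimalSets_iff _ _).1 hD
  have hU : C ∪ D ∈ rest F j :=
    rest_upward F C _ (hUC C (rest_subset_family F j hC'.1) D (rest_subset_family F j hD'.1))
      subset_union_left j hC'.1
  have hU' : C ∪ D ∈ rest F (j + 1) := by
    refine mem_sdiff.2 ⟨hU, fun h => ?_⟩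
    have h' := ((mem_minimalSets_iff _ _).1 h).2
    have e1 : C = C ∪ D := by
      by_contra hn
      exact h' C hC'.1 hn subset_union_left
    have e2 : D = C ∪ D := by
      by_contra hn
      exact h' D hD'.1 hn subset_union_right
    exact hne (e1.trans e2.symm)
  have eA : C ∪ D = A := by
    by_contra hn
    exact hA.2 _ hU' hn (union_subset hCA hDA)
  have eB : C ∪ D = B := by
    by_contra hn
    exact hB.2 _ hU' hn (union_subset hCB hDB)
  exact hAB (eA.symm.trans eB)
end

section
/- Let F be a union-closed family on n elements with m sets. If H(F) ≤ 3 and m > 2n, then there exists an element x ∈ {1, …, n} that belongs to more than m/2 of the sets of F. -/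
open Finset

theorem rest_step (F : Finset (Finset ℕ)) (i : ℕ) : ∀ A ∈ rest F i, ∀ B ∈ F, A ⊂ B →
    B ∈ rest F (i + 1) := by
  induction i with
  | zero =>
    intro A hA B hB hAB
    rw [rest]
    refine mem_sdiff.2 ⟨hB, fun h => ?_⟩
    exact (mem_filter.1 h).2 A hA hAB.ne hAB.subset
  | succ i ih =>
    intro A hA B hB hAB
    have hA' : A ∈ rest F i := by
      rw [rest] at hA
      exact (mem_sdiff.1 hA).1
    have hB' := ih A hA' B hB hAB
    rw [rest]
    refine mem_sdiff.2 ⟨hB', fun h => ?_⟩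
    exact (mem_filter.1 h).2 A hA hAB.ne hAB.subset

theorem rest_card (F : Finset (Finset ℕ)) (i : ℕ) : (rest F i).card ≤ F.card - i := by
  induction i with
  | zero => simp [rest]
  | succ i ih =>
    rw [rest]
    rcases (rest F i).eq_empty_or_nonempty with h | h
    · simp [h]
    · obtain ⟨A, hA⟩ := (rest F i).exists_minimal h
      have hmin : A ∈ minimalSets (rest F i) := by
        refine mem_filter.2 ⟨hA.prop, fun B hB hne hsub => hne ?_⟩
        exact subset_antisymm hsub (hA.le_of_le hB hsub)
      have : (rest F i \ minimalSets (rest F i)).card < (rest F i).card := by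
        apply card_lt_card
        refine ⟨sdiff_subset, fun h => ?_⟩
        exact (mem_sdiff.1 (h hA.prop)).2 hmin
      omega

theorem rest_three (F : Finset (Finset ℕ)) (h3 : height F ≤ 3) : rest F 3 = ∅ := by
  have hne : {H : ℕ | rest F H = ∅}.Nonempty := by
    refine ⟨F.card, ?_⟩
    have := rest_card F F.card
    simpa using this
  have h0 : rest F (height F) = ∅ := Nat.sInf_mem hne
  have hmono : ∀ d, rest F (height F + d) = ∅ := by
    intro d
    induction d with
    | zero => exact h0
    | succ d ih => rw [← add_assoc, rest, ih, empty_sdiff]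
  have := hmono (3 - height F)
  rwa [Nat.add_sub_cancel' h3] at this

theorem no_chain (F : Finset (Finset ℕ)) (h3 : height F ≤ 3) (A B C D : Finset ℕ)
    (hA : A ∈ F) (hB : B ∈ F) (hC : C ∈ F) (hD : D ∈ F)
    (hAB : A ⊂ B) (hBC : B ⊂ C) (hCD : C ⊂ D) : False := by
  have h1 := rest_step F 0 A hA B hB hAB
  have h2 := rest_step F 1 B h1 C hC hBC
  have h := rest_step F 2 C h2 D hD hCD
  rw [rest_three F h3] at h
  simp at h

theorem sup_id_mem (G : Finset (Finset ℕ)) (hne : G.Nonempty)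
    (hU : ∀ A ∈ G, ∀ B ∈ G, A ∪ B ∈ G) : G.sup id ∈ G := by
  rw [← Finset.sup'_eq_sup hne]
  exact Finset.sup'_mem (fun A => A ∈ G) (fun A hA B hB => hU A hA B hB) G hne id (fun A hA => hA)

/-- If `H(F) ≤ 3` and `m > 2n`, then some element of `{1, …, n}`
belongs to more than `m/2` of the sets of `F`. -/
theorem frankl_of_height_le_three_of_large (n m : ℕ) (F : Finset (Finset ℕ))
    (hF : IsUC F n m) (h3 : height F ≤ 3) (hm : m > 2 * n) :
    ∃ x ∈ Finset.Icc 1 n, 2 * (F.filter fun A => x ∈ A).card > m := by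
  obtain ⟨hne, hcard, hpos, hsup, hU⟩ := hF
  have htop : Finset.Icc 1 n ∈ F := hsup ▸ sup_id_mem F hne hU
  have hsub : ∀ A ∈ F, A ⊆ Finset.Icc 1 n := by
    intro A hA
    rw [← hsup]
    exact Finset.le_sup (f := id) hA
  obtain ⟨x, hx⟩ := hpos _ htop
  refine ⟨x, hx, ?_⟩
  have hsplit := card_filter_add_card_filter_not (s := F) (fun A => x ∈ A)
  suffices hle : (F.filter fun A => x ∉ A).card ≤ n by omega
  set G := F.filter fun A => x ∉ A with hG
  have hGF : ∀ A ∈ G, A ∈ F ∧ x ∉ A := fun A hA => by simpa [hG] using hA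
  rcases G.eq_empty_or_nonempty with h | hGne
  · simp [h]
  have hGU : ∀ A ∈ G, ∀ B ∈ G, A ∪ B ∈ G := by
    intro A hA B hB
    have h1 := hGF A hA
    have h2 := hGF B hB
    simp [hG, hU A h1.1 B h2.1, h1.2, h2.2]
  obtain ⟨C, hC⟩ : ∃ C, C = G.sup id := ⟨_, rfl⟩
  have hCG : C ∈ G := hC ▸ sup_id_mem G hGne hGU
  have hCmax : ∀ A ∈ G, A ⊆ C := fun A hA => hC ▸ Finset.le_sup (f := id) hA
  obtain ⟨hCF, hxC⟩ := hGF C hCG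
  have hCtop : C ⊂ Finset.Icc 1 n := ⟨hsub C hCF, fun h => hxC (h hx)⟩
  have hCcard : C.card < n := by simpa using card_lt_card hCtop
  have key : ∀ A ∈ G, ∀ B ∈ G, A ≠ C → B ≠ C → A ⊂ B → False := by
    intro A hA B hB _ hBC hAB
    exact no_chain F h3 A B C _ (hGF A hA).1 (hGF B hB).1 hCF htop hAB
      ((hCmax B hB).ssubset_of_ne hBC) hCtop
  have hunion : ∀ A ∈ G, ∀ B ∈ G, A ≠ C → B ≠ C → A ≠ B → A ∪ B = C := by
    intro A hA B hB hAC hBC hAB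
    by_contra hne
    have hm := hGU A hA B hB
    by_cases h1 : A = A ∪ B
    · have hBA : B ⊆ A := by rw [h1]; exact subset_union_right
      exact key B hB A hA hBC hAC (hBA.ssubset_of_ne (Ne.symm hAB))
    · exact key A hA _ hm hAC hne (subset_union_left.ssubset_of_ne h1)
  have hex : ∀ A : Finset ℕ, ∃ c, A ∈ G.erase C → c ∈ C ∧ c ∉ A := by
    intro A
    by_cases hA : A ∈ G.erase C
    · obtain ⟨hAC, hA'⟩ := mem_erase.1 hA
      obtain ⟨c, h1, h2⟩ := exists_of_ssubset ((hCmax A hA').ssubset_of_ne hAC)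
      exact ⟨c, fun _ => ⟨h1, h2⟩⟩
    · exact ⟨0, fun h => absurd h hA⟩
  choose f hf using hex
  have hinj : (G.erase C).card ≤ C.card := by
    refine card_le_card_of_injOn f (fun A hA => (hf A hA).1) ?_
    intro A hA B hB hfe
    by_contra hAB
    have hA' := mem_erase.1 hA
    have hB' := mem_erase.1 hB
    have hu := hunion A hA'.2 B hB'.2 hA'.1 hB'.1 hAB
    have h1 := hf A hA
    have h2 := hf B hB
    rw [← hu, mem_union] at h1
    rw [← hfe] at h2
    tauto
  have := card_erase_add_one hCG
  omega
end

section
/- Let F be a union-closed family on n elements with m sets. If H(F) ≥ n − 1, then there exists an element x ∈ {1, …, n} that belongs to more than m/2 of the sets of F. -/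
open Finset

lemma rest_subset (F : Finset (Finset ℕ)) (i : ℕ) : rest F i ⊆ F := by
  induction i with
  | zero => exact Finset.Subset.refl _
  | succ i ih => exact Finset.sdiff_subset.trans ih

lemma rest_card_s11 (F : Finset (Finset ℕ)) (h3 : ∀ A ∈ F, 3 ≤ A.card) (i : ℕ) :
    ∀ A ∈ rest F i, i + 3 ≤ A.card := by
  induction i with
  | zero => intro A hA; simpa using h3 A hA
  | succ i ih =>
    intro A hA
    simp only [rest, minimalSets, Finset.mem_sdiff, Finset.mem_filter] at hA
    obtain ⟨hA, hn⟩ := hA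
    have : ∃ B ∈ rest F i, B ≠ A ∧ B ⊆ A := by
      by_contra hc
      exact hn ⟨hA, fun B hB hne hs => hc ⟨B, hB, hne, hs⟩⟩
    obtain ⟨B, hB, hne, hs⟩ := this
    have h1 := ih B hB
    have h2 := Finset.card_lt_card (Finset.ssubset_iff_subset_ne.mpr ⟨hs, hne⟩)
    omega

/-- A member of size at most two exists when the height is at least `n - 1`. -/
lemma exists_small (n m : ℕ) (F : Finset (Finset ℕ))
    (hF : IsUC F n m) (h : n - 1 ≤ height F) : ∃ A ∈ F, A.card ≤ 2 := by
  by_contra hc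
  have h3 : ∀ A ∈ F, 3 ≤ A.card := by
    intro A hA
    by_contra hlt
    exact hc ⟨A, hA, by omega⟩
  obtain ⟨⟨A0, hA0⟩, -, -, hsup, -⟩ := hF
  have hle : ∀ A ∈ F, A.card ≤ n := by
    intro A hA
    have hs : A ⊆ Finset.Icc 1 n := by
      rw [← hsup]
      exact Finset.le_sup (f := id) hA
    simpa using Finset.card_le_card hs
  have hn : 3 ≤ n := (h3 A0 hA0).trans (hle A0 hA0)
  have hr : rest F (n - 2) = ∅ := by
    rw [Finset.eq_empty_iff_forall_notMem]
    intro A hA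
    have h1 := rest_card_s11 F h3 _ A hA
    have h2 := hle A (rest_subset F _ hA)
    omega
  have : height F ≤ n - 2 := Nat.sInf_le hr
  omega

/-- For a member `{a, b}` of `F`, the members avoiding both are fewer than
those containing both. -/
lemma avoid_lt (F : Finset (Finset ℕ)) (hne : ∀ A ∈ F, A.Nonempty)
    (hU : ∀ A ∈ F, ∀ B ∈ F, A ∪ B ∈ F) (a b : ℕ) (hab : {a, b} ∈ F) :
    (F.filter fun A => a ∉ A ∧ b ∉ A).card < (F.filter fun A => a ∈ A ∧ b ∈ A).card := by
  have hinj : Set.InjOn (fun A : Finset ℕ => A ∪ {a, b})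
      (F.filter fun A => a ∉ A ∧ b ∉ A) := by
    intro A hA B hB hAB
    simp only [Finset.coe_filter, Set.mem_ofPred_eq] at hA hB
    ext x
    have := Finset.ext_iff.mp hAB x
    simp only [Finset.mem_union, Finset.mem_insert, Finset.mem_singleton] at this
    by_cases hxa : x = a
    · subst hxa; tauto
    · by_cases hxb : x = b
      · subst hxb; tauto
      · tauto
  rw [← Finset.card_image_of_injOn hinj]
  apply Finset.card_lt_card
  rw [Finset.ssubset_iff_of_subset]
  · refine ⟨{a, b}, by simp [hab], ?_⟩
    intro hm
    obtain ⟨A, hA, hE⟩ := Finset.mem_image.mp hm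
    rw [Finset.mem_filter] at hA
    obtain ⟨x, hx⟩ := hne A hA.1
    have : x ∈ ({a, b} : Finset ℕ) := by
      rw [← hE]; exact Finset.mem_union_left _ hx
    simp only [Finset.mem_insert, Finset.mem_singleton] at this
    rcases this with rfl | rfl
    · exact hA.2.1 hx
    · exact hA.2.2 hx
  · intro B hB
    obtain ⟨A, hA, rfl⟩ := Finset.mem_image.mp hB
    rw [Finset.mem_filter] at hA
    exact Finset.mem_filter.mpr ⟨hU A hA.1 _ hab, by simp, by simp⟩

/-- If `H(F) ≥ n − 1`, then some element of `{1, …, n}` belongs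
to more than `m/2` of the sets of `F`. -/
theorem frankl_of_height_ge_pred (n m : ℕ) (F : Finset (Finset ℕ))
    (hF : IsUC F n m) (h : n - 1 ≤ height F) :
    ∃ x ∈ Finset.Icc 1 n, 2 * (F.filter fun A => x ∈ A).card > m := by
  obtain ⟨S, hS, hc⟩ := exists_small n m F hF h
  obtain ⟨-, hm, hne, hsup, hU⟩ := hF
  have hs : S ⊆ Finset.Icc 1 n := by
    rw [← hsup]
    exact Finset.le_sup (f := id) hS
  have hpair : ∃ a b, S = {a, b} := by
    have hpos := Finset.card_pos.mpr (hne S hS)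
    have : S.card = 1 ∨ S.card = 2 := by omega
    rcases this with h1 | h2
    · obtain ⟨a, rfl⟩ := Finset.card_eq_one.mp h1
      exact ⟨a, a, by simp⟩
    · obtain ⟨a, b, -, rfl⟩ := Finset.card_eq_two.mp h2
      exact ⟨a, b, rfl⟩
  obtain ⟨a, b, rfl⟩ := hpair
  have hlt := avoid_lt F hne hU a b hS
  have e1 := Finset.card_union_add_card_inter (F.filter fun A => a ∈ A) (F.filter fun A => b ∈ A)
  rw [← Finset.filter_or, ← Finset.filter_and] at e1
  have e2 := Finset.card_filter_add_card_filter_not (s := F) (fun A => a ∈ A ∨ b ∈ A)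
  simp only [not_or] at e2
  by_contra hcon
  have ha : ¬ 2 * (F.filter fun A => a ∈ A).card > m :=
    fun hh => hcon ⟨a, hs (by simp), hh⟩
  have hb : ¬ 2 * (F.filter fun A => b ∈ A).card > m :=
    fun hh => hcon ⟨b, hs (by simp), hh⟩
  omega
end
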